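/- Let 𝒞 be a pointed protomodular category and ℰ a class of morphisms of 𝒞 such that (𝒞, ℰ) satisfies axioms (E1)–(E5) and (M). Let ℰ¹ be the class of double ℰ-extensions in the category Ext_ℰ(𝒞). Then Ext_ℰ(𝒞) is pointed and protomodular, and (Ext_ℰ(𝒞), ℰ¹) again satisfies axioms (E1)–(E5) and (M). -/

import Mathlib

open CategoryTheory Limits

universe v u

section Axioms
variable {𝒟 : Type u} [Category.{v} 𝒟]

/-- Axiom (E1): the class contains all isomorphisms. -/
def AxE1 (E : MorphismProperty 𝒟) : Prop := ∀ {X Y : 𝒟} (f : X ⟶ Y), IsIso f → E f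

/-- Axiom (E2): pullbacks of morphisms of the class exist and belong to the class. -/
def AxE2 (E : MorphismProperty 𝒟) : Prop :=
  ∀ {X Y Z : 𝒟} (f : X ⟶ Z) (g : Y ⟶ Z), E g →
    ∃ (P : 𝒟) (p₁ : P ⟶ X) (p₂ : P ⟶ Y), IsPullback p₁ p₂ f g ∧ E p₁

/-- Axiom (E3): the class is closed under composition. -/
def AxE3 (E : MorphismProperty 𝒟) : Prop :=
  ∀ {X Y Z : 𝒟} (f : X ⟶ Y) (g : Y ⟶ Z), E f → E g → E (f ≫ g)

/-- Axiom (E4): if `f ≫ g` is in the class then so is `g`. -/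
def AxE4 (E : MorphismProperty 𝒟) : Prop :=
  ∀ {X Y Z : 𝒟} (f : X ⟶ Y) (g : Y ⟶ Z), E (f ≫ g) → E g

/-- Axiom (E5): in a morphism of short exact sequences over a fixed base `A₀`, if the
extension `a` and the induced morphism `k` on kernels lie in the class, then so does the
middle morphism `f`. -/
def AxE5 [HasZeroMorphisms 𝒟] (E : MorphismProperty 𝒟) : Prop :=
  ∀ {K L A₁ B A₀ : 𝒟} (ka : K ⟶ A₁) (kb : L ⟶ B) (a : A₁ ⟶ A₀) (b : B ⟶ A₀)
    (f : A₁ ⟶ B) (k : K ⟶ L), f ≫ b = a → k ≫ kb = ka ≫ f →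
    ∀ (ha : ka ≫ a = 0) (hb : kb ≫ b = 0),
    Nonempty (IsLimit (KernelFork.ofι ka ha)) →
    Nonempty (IsLimit (KernelFork.ofι kb hb)) →
    E a → E k → E f

/-- The split short five lemma in a pointed category. -/
def SplitShortFive (𝒟 : Type u) [Category.{v} 𝒟] [HasZeroMorphisms 𝒟] : Prop :=
  ∀ {K A B K' A' B' : 𝒟} (k : K ⟶ A) (f : A ⟶ B) (s : B ⟶ A)
    (k' : K' ⟶ A') (f' : A' ⟶ B') (s' : B' ⟶ A')
    (u : K ⟶ K') (v : A ⟶ A') (w : B ⟶ B'),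
    s ≫ f = 𝟙 B → s' ≫ f' = 𝟙 B' →
    ∀ (hk : k ≫ f = 0) (hk' : k' ≫ f' = 0),
    Nonempty (IsLimit (KernelFork.ofι k hk)) →
    Nonempty (IsLimit (KernelFork.ofι k' hk')) →
    u ≫ k' = k ≫ v → v ≫ f' = f ≫ w →
    IsIso u → IsIso w → IsIso v

/-- Pullbacks along split epimorphisms exist. -/
def HasSplitEpiPullbacks (𝒟 : Type u) [Category.{v} 𝒟] : Prop :=
  ∀ {X Y Z : 𝒟} (g : X ⟶ Z) (s : Z ⟶ X), s ≫ g = 𝟙 Z → ∀ h : Y ⟶ Z,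
    ∃ (P : 𝒟) (p₁ : P ⟶ X) (p₂ : P ⟶ Y), IsPullback p₁ p₂ g h

/-- A pointed category is protomodular when it has pullbacks along split epimorphisms
and the split short five lemma holds. -/
def ProtomodularCat (𝒟 : Type u) [Category.{v} 𝒟] [HasZeroMorphisms 𝒟] : Prop :=
  HasSplitEpiPullbacks 𝒟 ∧ SplitShortFive 𝒟

/-- An object of the `E`-slice category `(𝒟 ↓_E B)`: a morphism of `E` with codomain `B`. -/
structure ESliceObj (E : MorphismProperty 𝒟) (B : 𝒟) where
  dom : 𝒟
  hom : dom ⟶ B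
  mem : E hom

/-- Morphisms of the `E`-slice category. -/
@[ext] structure ESliceHom {E : MorphismProperty 𝒟} {B : 𝒟} (g h : ESliceObj E B) where
  top : g.dom ⟶ h.dom
  w : top ≫ h.hom = g.hom

instance {E : MorphismProperty 𝒟} {B : 𝒟} : Category (ESliceObj E B) where
  Hom := ESliceHom
  id g := ⟨𝟙 g.dom, Category.id_comp _⟩
  comp φ ψ := ⟨φ.top ≫ ψ.top, by rw [Category.assoc, ψ.w, φ.w]⟩
  id_comp φ := ESliceHom.ext (Category.id_comp φ.top)
  comp_id φ := ESliceHom.ext (Category.comp_id φ.top)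
  assoc φ ψ χ := ESliceHom.ext (Category.assoc φ.top ψ.top χ.top)

/-- A functor `(𝒟 ↓_E B) ⥤ (𝒟 ↓_E A)` realizing base change (pullback) along
`f : A ⟶ B`. -/
structure PullbackFunctorAlong (E : MorphismProperty 𝒟) {A B : 𝒟} (f : A ⟶ B) where
  R : ESliceObj E B ⥤ ESliceObj E A
  top : ∀ g : ESliceObj E B, (R.obj g).dom ⟶ g.dom
  isPB : ∀ g : ESliceObj E B, IsPullback (top g) (R.obj g).hom g.hom f
  nat : ∀ {g h : ESliceObj E B} (φ : g ⟶ h), (R.map φ).top ≫ top h = top g ≫ φ.top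

/-- Axiom (M): every morphism of the class is monadic, i.e. any base-change functor
`f* : (𝒟 ↓_E B) ⥤ (𝒟 ↓_E A)` along a morphism `f` of `E` is a monadic right adjoint. -/
def AxM (E : MorphismProperty 𝒟) : Prop :=
  ∀ {A B : 𝒟} (f : A ⟶ B), E f →
    ∀ P : PullbackFunctorAlong E f, Nonempty (MonadicRightAdjoint P.R)

/-- An object of the category `Ext_E(𝒟)` of `E`-extensions: a morphism of class `E`. -/
structure ExtObj (E : MorphismProperty 𝒟) where
  dom : 𝒟
  cod : 𝒟
  hom : dom ⟶ cod
  mem : E hom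

/-- Morphisms of `Ext_E(𝒟)`: commutative squares. -/
@[ext] structure ExtHom {E : MorphismProperty 𝒟} (a b : ExtObj E) where
  top : a.dom ⟶ b.dom
  bot : a.cod ⟶ b.cod
  w : top ≫ b.hom = a.hom ≫ bot

instance {E : MorphismProperty 𝒟} : Category (ExtObj E) where
  Hom := ExtHom
  id a := ⟨𝟙 a.dom, 𝟙 a.cod, by simp⟩
  comp φ ψ := ⟨φ.top ≫ ψ.top, φ.bot ≫ ψ.bot, by
    rw [Category.assoc, ψ.w, ← Category.assoc, φ.w, Category.assoc]⟩
  id_comp φ := ExtHom.ext (Category.id_comp φ.top) (Category.id_comp φ.bot)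
  comp_id φ := ExtHom.ext (Category.comp_id φ.top) (Category.comp_id φ.bot)
  assoc φ ψ χ := ExtHom.ext (Category.assoc φ.top ψ.top χ.top)
    (Category.assoc φ.bot ψ.bot χ.bot)

instance {E : MorphismProperty 𝒟} [HasZeroMorphisms 𝒟] :
    HasZeroMorphisms (ExtObj E) where
  zero a b := ⟨⟨0, 0, by simp⟩⟩
  comp_zero φ c := ExtHom.ext (comp_zero) (comp_zero)
  zero_comp a {b c} φ := ExtHom.ext (zero_comp) (zero_comp)

/-- A morphism of `Ext_E(𝒟)` is a double `E`-extension when its two components are in `E`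
and the comparison morphism to (any) pullback is in `E`. -/
def IsDoubleExt {E : MorphismProperty 𝒟} {a b : ExtObj E} (φ : a ⟶ b) : Prop :=
  E φ.top ∧ E φ.bot ∧
  ∀ {P : 𝒟} (p₁ : P ⟶ a.cod) (p₂ : P ⟶ b.dom), IsPullback p₁ p₂ φ.bot b.hom →
    ∀ (l : a.dom ⟶ P), l ≫ p₁ = a.hom → l ≫ p₂ = φ.top → E l

/-- The class of double `E`-extensions, as a morphism property of `Ext_E(𝒟)`. -/
def DoubleExtClass (E : MorphismProperty 𝒟) : MorphismProperty (ExtObj E) :=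
  fun _ _ φ => IsDoubleExt φ

end Axioms

/-!
For a morphism of extensions whose codomain component lies in `E`, being a double extension is
equivalent to the induced morphism between the kernels lying in `E`. Since the kernel functor on
extensions preserves kernels of double extensions, this reduces (E4), (E5) and the split short five
lemma for extensions to the corresponding properties of the base category.

As for (M), every morphism of `E` is monadic if and only if every morphism of `E` is a regular
epimorphism along which descent is effective; over a pointed base, testing monadicity against the
product projections `B × X ⟶ B` shows that a monadic `f : A ⟶ B` is a regular epimorphism. Pullbacks
of double extensions are computed on domains and on codomains separately, so a descent datum of
extensions consists of two descent data in the base category. The two objects they descend to are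
connected by a morphism of `E` because the quotient morphism between the domains is a regular
epimorphism.
-/

section
variable {𝒟 : Type u} [Category.{v} 𝒟] {E : MorphismProperty 𝒟}

lemma AxE1.respectsIso (h1 : AxE1 E) (h3 : AxE3 E) : E.RespectsIso :=
  have : E.IsStableUnderComposition := ⟨fun f g hf hg => h3 f g hf hg⟩
  MorphismProperty.respectsIso_of_isStableUnderComposition fun _ _ f hf => h1 f hf

lemma AxE1.isMultiplicative (h1 : AxE1 E) (h3 : AxE3 E) : E.IsMultiplicative where
  id_mem X := h1 (𝟙 X) inferInstance
  comp_mem f g hf hg := h3 f g hf hg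

lemma AxE2.hasPullbacks (h2 : AxE2 E) : E.HasPullbacks where
  hasPullback {_ _ _ f} g hf :=
    let ⟨_, _, _, h, _⟩ := h2 g f hf
    h.flip.hasPullback

lemma AxE2.isStableUnderBaseChange [E.RespectsIso] (h2 : AxE2 E) : E.IsStableUnderBaseChange :=
  .of_forall_exists_isPullback fun f g _ hg => h2 f g hg

lemma AxE4.mem_of_comp_eq_id [E.ContainsIdentities] (h4 : AxE4 E) {A B : 𝒟} {s : B ⟶ A} {f : A ⟶ B}
    (h : s ≫ f = 𝟙 B) : E f :=
  h4 s f (h ▸ E.id_mem B)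

end

namespace ExtHom
variable {𝒟 : Type u} [Category.{v} 𝒟] {E : MorphismProperty 𝒟} {a b c p : ExtObj E}

@[ext] lemma hom_ext {f g : a ⟶ b} (htop : f.top = g.top) (hbot : f.bot = g.bot) : f = g :=
  ExtHom.ext htop hbot

@[simp] lemma id_top (a : ExtObj E) : ExtHom.top (𝟙 a) = 𝟙 a.dom := rfl

@[simp] lemma id_bot (a : ExtObj E) : ExtHom.bot (𝟙 a) = 𝟙 a.cod := rfl

@[simp] lemma comp_top (f : a ⟶ b) (g : b ⟶ c) : (f ≫ g).top = f.top ≫ g.top := rfl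

@[simp] lemma comp_bot (f : a ⟶ b) (g : b ⟶ c) : (f ≫ g).bot = f.bot ≫ g.bot := rfl

lemma isIso_of_isIso_top_bot (f : a ⟶ b) [IsIso f.top] [IsIso f.bot] : IsIso f :=
  ⟨⟨inv f.top, inv f.bot, by rw [IsIso.inv_comp_eq, ← Category.assoc, f.w]; simp⟩,
    by ext <;> simp, by ext <;> simp⟩

lemma isPullback_of_isPullback_top_bot {p₁ : p ⟶ a} {p₂ : p ⟶ b} {f : a ⟶ c} {g : b ⟶ c}
    (ht : IsPullback p₁.top p₂.top f.top g.top) (hb : IsPullback p₁.bot p₂.bot f.bot g.bot) :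
    IsPullback p₁ p₂ f g := by
  refine ⟨⟨hom_ext ht.w hb.w⟩, ⟨PullbackCone.IsLimit.mk _ (fun s => ⟨?_, ?_, ?_⟩) ?_ ?_ ?_⟩⟩
  · exact ht.lift s.fst.top s.snd.top (congrArg ExtHom.top s.condition)
  · exact hb.lift s.fst.bot s.snd.bot (congrArg ExtHom.bot s.condition)
  · apply hb.hom_ext
    · simp [← p₁.w, s.fst.w]
    · simp [← p₂.w, s.snd.w]
  · exact fun s => hom_ext (ht.lift_fst _ _ _) (hb.lift_fst _ _ _)
  · exact fun s => hom_ext (ht.lift_snd _ _ _) (hb.lift_snd _ _ _)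
  · intro s m h₁ h₂
    ext
    · apply ht.hom_ext <;> simp [← h₁, ← h₂]
    · apply hb.hom_ext <;> simp [← h₁, ← h₂]

end ExtHom

namespace ExtObj
variable {𝒟 : Type u} [Category.{v} 𝒟] (E : MorphismProperty 𝒟)

/-- The functor sending an extension to its domain. -/
@[simps] def domFunctor : ExtObj E ⥤ 𝒟 where
  obj a := a.dom
  map f := f.top

/-- The functor sending an extension to its codomain. -/
@[simps] def codFunctor : ExtObj E ⥤ 𝒟 where
  obj a := a.cod
  map f := f.bot

variable {E} {a b : ExtObj E}

instance isIso_top (f : a ⟶ b) [IsIso f] : IsIso f.top :=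
  inferInstanceAs (IsIso ((domFunctor E).map f))

instance isIso_bot (f : a ⟶ b) [IsIso f] : IsIso f.bot :=
  inferInstanceAs (IsIso ((codFunctor E).map f))

end ExtObj

lemma exists_isPullback_of_mem {𝒟 : Type u} [Category.{v} 𝒟] {E : MorphismProperty 𝒟}
    [E.HasPullbacks] {X Y Z : 𝒟} (f : X ⟶ Z) {g : Y ⟶ Z} (hg : E g) :
    ∃ (P : 𝒟) (p₁ : P ⟶ X) (p₂ : P ⟶ Y), IsPullback p₁ p₂ f g :=
  have := E.hasPullback f hg
  ⟨_, _, _, (IsPullback.of_hasPullback g f).flip⟩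

namespace IsDoubleExt
variable {𝒟 : Type u} [Category.{v} 𝒟] {E : MorphismProperty 𝒟} {a b c : ExtObj E}

lemma exists_comparison [E.HasPullbacks] {f : a ⟶ b} (hf : IsDoubleExt f) :
    ∃ (P : 𝒟) (p₁ : P ⟶ a.cod) (p₂ : P ⟶ b.dom) (l : a.dom ⟶ P),
      IsPullback p₁ p₂ f.bot b.hom ∧ l ≫ p₁ = a.hom ∧ l ≫ p₂ = f.top ∧ E l := by
  obtain ⟨P, p₁, p₂, hP⟩ := exists_isPullback_of_mem f.bot b.mem
  exact ⟨P, p₁, p₂, hP.lift a.hom f.top f.w.symm, hP, hP.lift_fst _ _ _, hP.lift_snd _ _ _,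
    hf.2.2 p₁ p₂ hP _ (hP.lift_fst _ _ _) (hP.lift_snd _ _ _)⟩

variable [E.IsStableUnderBaseChange]

lemma of_isPullback [E.IsStableUnderComposition] {f : a ⟶ b} {P : 𝒟} {p₁ : P ⟶ a.cod}
    {p₂ : P ⟶ b.dom} (hP : IsPullback p₁ p₂ f.bot b.hom) {l : a.dom ⟶ P} (hl₁ : l ≫ p₁ = a.hom)
    (hl₂ : l ≫ p₂ = f.top) (hbot : E f.bot) (hl : E l) : IsDoubleExt f := by
  refine ⟨hl₂ ▸ E.comp_mem _ _ hl (E.of_isPullback hP hbot), hbot,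
    fun q₁ q₂ hQ m hm₁ hm₂ => ?_⟩
  have hm : l ≫ (hP.isoIsPullback _ _ hQ).hom = m := by
    apply hQ.hom_ext <;> simp [hl₁, hl₂, hm₁, hm₂]
  rwa [← hm, E.cancel_right_of_respectsIso]

lemma of_isIso [E.IsMultiplicative] (f : a ⟶ b) [IsIso f] : IsDoubleExt f :=
  of_isPullback (.of_vert_isIso ⟨f.w.symm⟩) (Category.id_comp _) (Category.id_comp _)
    (E.of_isIso _) (E.id_mem _)

variable [E.IsStableUnderComposition] [E.HasPullbacks]

lemma comp {f : a ⟶ b} {g : b ⟶ c} (hf : IsDoubleExt f) (hg : IsDoubleExt g) :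
    IsDoubleExt (f ≫ g) := by
  obtain ⟨P, p₁, p₂, l, hP, hl₁, hl₂, hl⟩ := hf.exists_comparison
  obtain ⟨Q, q₁, q₂, m, hQ, hm₁, hm₂, hm⟩ := hg.exists_comparison
  obtain ⟨R, r₁, r₂, hR⟩ := exists_isPullback_of_mem f.bot (E.of_isPullback hQ.flip c.mem)
  let n : P ⟶ R := hR.lift p₁ (p₂ ≫ m) (by simp [hP.w, hm₁])
  have hn : IsPullback p₂ n m r₂ :=
    .of_bot (by simpa [hm₁, n] using hP.flip) (by simp [n]) hR.flip
  refine of_isPullback (l := l ≫ n) (hR.flip.paste_horiz hQ.flip).flip ?_ ?_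
    (E.comp_mem _ _ hf.2.1 hg.2.1) (E.comp_mem _ _ hl (E.of_isPullback hn hm))
  · simp [hl₁, n]
  · simp [hm₂, n, reassoc_of% hl₂]

lemma exists_isPullback (f : a ⟶ c) {g : b ⟶ c} (hg : IsDoubleExt g) :
    ∃ (p : ExtObj E) (p₁ : p ⟶ a) (p₂ : p ⟶ b), IsPullback p₁.top p₂.top f.top g.top ∧
      IsPullback p₁.bot p₂.bot f.bot g.bot ∧ IsDoubleExt p₁ := by
  obtain ⟨G, g₁, g₂, m, hG, hm₁, hm₂, hm⟩ := hg.exists_comparison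
  obtain ⟨Q, s₁, s₂, hQ⟩ := exists_isPullback_of_mem f.bot hg.2.1
  obtain ⟨R, r₁, r₂, hR⟩ := exists_isPullback_of_mem s₁ a.mem
  let j : R ⟶ G := hG.lift (r₁ ≫ s₂) (r₂ ≫ f.top) (by simp [← hQ.w, f.w, hR.w_assoc])
  have hj : IsPullback r₂ j f.top g₂ :=
    .of_bot (by simpa [f.w, j] using hR.flip.paste_vert hQ) (by simp [j]) hG.flip
  obtain ⟨P, n, t, hP⟩ := exists_isPullback_of_mem j hm
  have hn : E n := E.of_isPullback hP.flip hm
  have ht : IsPullback (n ≫ r₂) t f.top g.top := hm₂ ▸ (hP.flip.paste_vert hj.flip).flip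
  have hw : t ≫ b.hom = (n ≫ r₁) ≫ s₂ := by
    simp [← hm₁, ← hP.w_assoc, j]
  exact ⟨⟨P, Q, n ≫ r₁, E.comp_mem _ _ hn (E.of_isPullback hR.flip a.mem)⟩,
    ⟨n ≫ r₂, s₁, by simp [hR.w]⟩, ⟨t, s₂, hw⟩, ht, hQ,
    of_isPullback hR rfl rfl (E.of_isPullback hQ.flip hg.2.1) hn⟩

end IsDoubleExt

section
variable {𝒟 : Type u} [Category.{v} 𝒟] {E : MorphismProperty 𝒟} {a b c p : ExtObj E}
  [E.IsStableUnderBaseChange] [E.IsStableUnderComposition] [E.HasPullbacks]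

namespace IsDoubleExt
variable {p₁ : p ⟶ a} {p₂ : p ⟶ b} {f : a ⟶ c} {g : b ⟶ c}

lemma preservesLimit_domFunctor (f : a ⟶ c) (hg : IsDoubleExt g) :
    PreservesLimit (cospan f g) (ExtObj.domFunctor E) :=
  let ⟨_, _, _, ht, hb, _⟩ := hg.exists_isPullback f
  have h := ExtHom.isPullback_of_isPullback_top_bot ht hb
  preservesLimit_of_preserves_limit_cone h.isLimit
    ((isLimitMapConePullbackConeEquiv (ExtObj.domFunctor E) h.w).symm ht.isLimit)

lemma preservesLimit_codFunctor (f : a ⟶ c) (hg : IsDoubleExt g) :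
    PreservesLimit (cospan f g) (ExtObj.codFunctor E) :=
  let ⟨_, _, _, ht, hb, _⟩ := hg.exists_isPullback f
  have h := ExtHom.isPullback_of_isPullback_top_bot ht hb
  preservesLimit_of_preserves_limit_cone h.isLimit
    ((isLimitMapConePullbackConeEquiv (ExtObj.codFunctor E) h.w).symm hb.isLimit)

lemma isPullback_top (h : IsPullback p₁ p₂ f g) (hg : IsDoubleExt g) :
    IsPullback p₁.top p₂.top f.top g.top :=
  have := hg.preservesLimit_domFunctor f
  h.map (ExtObj.domFunctor E)

lemma isPullback_bot (h : IsPullback p₁ p₂ f g) (hg : IsDoubleExt g) :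
    IsPullback p₁.bot p₂.bot f.bot g.bot :=
  have := hg.preservesLimit_codFunctor f
  h.map (ExtObj.codFunctor E)

end IsDoubleExt

lemma axE2_doubleExtClass : AxE2 (DoubleExtClass E) := fun f _ hg =>
  let ⟨p, p₁, p₂, ht, hb, hp⟩ := IsDoubleExt.exists_isPullback f hg
  ⟨p, p₁, p₂, ExtHom.isPullback_of_isPullback_top_bot ht hb, hp⟩

end

/-! ### Kernels of extensions -/

section
variable {𝒟 : Type u} [Category.{v} 𝒟] [HasZeroMorphisms 𝒟]

/-- `IsKernelOf k f` says that `k` is a kernel of `f`. -/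
def IsKernelOf {K A B : 𝒟} (k : K ⟶ A) (f : A ⟶ B) : Prop :=
  ∃ w : k ≫ f = 0, Nonempty (IsLimit (KernelFork.ofι k w))

lemma isKernelOf_kernel_ι {A B : 𝒟} (f : A ⟶ B) [HasKernel f] : IsKernelOf (kernel.ι f) f :=
  ⟨kernel.condition f, ⟨kernelIsKernel f⟩⟩

namespace IsKernelOf
variable {K L A B P X Y Z : 𝒟}

lemma isPullback {k : K ⟶ A} {f : A ⟶ B} (h : IsKernelOf k f) (hZ : IsZero Z) :
    IsPullback k (0 : K ⟶ Z) f 0 := by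
  obtain ⟨w, ⟨h⟩⟩ := h
  let lift (s : PullbackCone f (0 : Z ⟶ B)) := KernelFork.IsLimit.lift' h s.fst
    (by simp [s.condition])
  exact ⟨⟨by simp [w]⟩, ⟨PullbackCone.IsLimit.mk _ (fun s => (lift s).1) (fun s => (lift s).2)
    (fun s => hZ.eq_of_tgt _ _)
    fun s m hm _ => Fork.IsLimit.hom_ext h (hm.trans (lift s).2.symm)⟩⟩

lemma of_isPullback {k : K ⟶ A} {f : A ⟶ B} {j : K ⟶ Z} {i : Z ⟶ B} (h : IsPullback k j f i)
    (hZ : IsZero Z) : IsKernelOf k f := by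
  obtain rfl : i = 0 := hZ.eq_of_src _ _
  exact ⟨by simpa using h.w, ⟨KernelFork.IsLimit.ofι k _ (fun t ht => h.lift t 0 (by simp [ht]))
    (fun t ht => h.lift_fst _ _ _)
    (fun t ht m hm => h.hom_ext (by simp [hm]) (hZ.eq_of_tgt _ _))⟩⟩

lemma mono {k : K ⟶ A} {f : A ⟶ B} (h : IsKernelOf k f) : Mono k :=
  let ⟨_, ⟨h⟩⟩ := h
  mono_of_isLimit_fork h

variable [HasZeroObject 𝒟]
open ZeroObject

lemma of_isPullback_lift {p₁ : P ⟶ X} {p₂ : P ⟶ Y} {f : X ⟶ Z} {g : Y ⟶ Z}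
    (hP : IsPullback p₁ p₂ f g) {k : K ⟶ Y} (hk : IsKernelOf k g) :
    IsKernelOf (hP.lift 0 k (by simp [hk.choose])) p₁ := by
  have h := hk.isPullback (isZero_zero 𝒟)
  exact of_isPullback (.of_right (h₁₂ := p₂) (v₁₃ := g) (h₂₁ := 0) (h₂₂ := f) (by simpa using h)
    (by simp) hP.flip) (isZero_zero 𝒟)

lemma isPullback_of_comm {κ : K ⟶ L} {k : K ⟶ A} {i : L ⟶ P} {l : A ⟶ P} {p : P ⟶ X}
    (hk : IsKernelOf k (l ≫ p)) (hi : IsKernelOf i p) (w : κ ≫ i = k ≫ l) :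
    IsPullback κ k i l :=
  .of_right (by simpa using (hk.isPullback (isZero_zero 𝒟)).flip) w
    (hi.isPullback (isZero_zero 𝒟)).flip

end IsKernelOf
end

namespace ExtObj
variable {𝒟 : Type u} [Category.{v} 𝒟] [HasZeroMorphisms 𝒟] {E : MorphismProperty 𝒟}

instance : (domFunctor E).PreservesZeroMorphisms where

instance : (codFunctor E).PreservesZeroMorphisms where

section
variable [HasZeroObject 𝒟]
open ZeroObject

instance [E.ContainsIdentities] : HasZeroObject (ExtObj E) where
  zero := ⟨⟨0, 0, 𝟙 0, E.id_mem 0⟩, (IsZero.iff_id_eq_zero _).2 <|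
    ExtHom.hom_ext ((isZero_zero 𝒟).eq_of_src _ _) ((isZero_zero 𝒟).eq_of_src _ _)⟩

instance [E.HasPullbacks] (a : ExtObj E) : HasKernel a.hom :=
  let ⟨_, _, _, h⟩ := exists_isPullback_of_mem (0 : 0 ⟶ a.cod) a.mem
  let ⟨_, ⟨h⟩⟩ := IsKernelOf.of_isPullback h.flip (isZero_zero 𝒟)
  ⟨⟨_, h⟩⟩

end

variable [∀ a : ExtObj E, HasKernel a.hom]

variable (E) in
/-- The functor sending an extension to its kernel object. -/
@[simps] noncomputable def kernelFunctor : ExtObj E ⥤ 𝒟 where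
  obj a := kernel a.hom
  map {a b} f := kernel.map a.hom b.hom f.top f.bot f.w.symm
  map_comp f g := by ext; simp

lemma isKernelOf_kernelFunctor_map {k a b : ExtObj E} {i : k ⟶ a} {f : a ⟶ b}
    (htop : IsKernelOf i.top f.top) [Mono i.bot] :
    IsKernelOf ((kernelFunctor E).map i) ((kernelFunctor E).map f) := by
  have hmono := htop.mono
  obtain ⟨w, ⟨h⟩⟩ := htop
  change IsKernelOf (kernel.map k.hom a.hom i.top i.bot i.w.symm)
    (kernel.map a.hom b.hom f.top f.bot f.w.symm)
  have hmono' : Mono (kernel.map k.hom a.hom i.top i.bot i.w.symm) :=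
    have := mono_comp (kernel.ι k.hom) i.top
    mono_of_mono_fac (kernel.lift_ι a.hom (kernel.ι k.hom ≫ i.top) _)
  refine ⟨by ext; simp [w], ⟨KernelFork.IsLimit.ofι' _ _ fun {X} t ht => ?_⟩⟩
  have ht' : (t ≫ kernel.ι a.hom) ≫ f.top = 0 := by simpa using ht =≫ kernel.ι b.hom
  obtain ⟨s, hs : s ≫ i.top = _⟩ := KernelFork.IsLimit.lift' h _ ht'
  have hsk : s ≫ k.hom = 0 := by
    rw [← cancel_mono i.bot, Category.assoc, ← i.w, reassoc_of% hs]
    simp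
  exact ⟨kernel.lift k.hom s hsk, by ext; simp [hs]⟩

end ExtObj

lemma AxE5.mem {𝒟 : Type u} [Category.{v} 𝒟] [HasZeroMorphisms 𝒟] {E : MorphismProperty 𝒟}
    (h5 : AxE5 E) {K L A B C : 𝒟} {ka : K ⟶ A} {kb : L ⟶ B} {f : A ⟶ B} {b : B ⟶ C} {k : K ⟶ L}
    (ha : IsKernelOf ka (f ≫ b)) (hb : IsKernelOf kb b) (w : k ≫ kb = ka ≫ f)
    (hfb : E (f ≫ b)) (hk : E k) : E f :=
  h5 ka kb _ b f k rfl w ha.1 hb.1 ha.2 hb.2 hfb hk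

lemma SplitShortFive.isIso {𝒟 : Type u} [Category.{v} 𝒟] [HasZeroMorphisms 𝒟]
    (h : SplitShortFive 𝒟) {K A B K' A' B' : 𝒟} {k : K ⟶ A} {f : A ⟶ B} {s : B ⟶ A}
    {k' : K' ⟶ A'} {f' : A' ⟶ B'} {s' : B' ⟶ A'} {u : K ⟶ K'} {v : A ⟶ A'} {w : B ⟶ B'}
    (hs : s ≫ f = 𝟙 B) (hs' : s' ≫ f' = 𝟙 B') (hk : IsKernelOf k f) (hk' : IsKernelOf k' f')
    (hu : u ≫ k' = k ≫ v) (hv : v ≫ f' = f ≫ w) [IsIso u] [IsIso w] : IsIso v :=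
  h k f s k' f' s' u v w hs hs' hk.1 hk'.1 hk.2 hk'.2 hu hv inferInstance inferInstance

section
variable {𝒟 : Type u} [Category.{v} 𝒟] [HasZeroMorphisms 𝒟] [HasZeroObject 𝒟]
  {E : MorphismProperty 𝒟} [E.HasPullbacks] [E.IsStableUnderBaseChange]
open ZeroObject

namespace IsDoubleExt
variable {a b c : ExtObj E}

lemma kernelFunctor_map_mem {f : a ⟶ b} (hf : IsDoubleExt f) :
    E ((ExtObj.kernelFunctor E).map f) := by
  obtain ⟨P, p₁, p₂, l, hP, hl₁, hl₂, hl⟩ := hf.exists_comparison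
  have ha : IsKernelOf (kernel.ι a.hom) (l ≫ p₁) := by simpa only [hl₁] using isKernelOf_kernel_ι _
  have hi := IsKernelOf.of_isPullback_lift hP (isKernelOf_kernel_ι b.hom)
  refine E.of_isPullback (ha.isPullback_of_comm hi ?_).flip hl
  apply hP.hom_ext <;> simp [hl₁, hl₂]

lemma of_kernelFunctor_map_mem [E.IsStableUnderComposition] (h5 : AxE5 E) {f : a ⟶ b}
    (hbot : E f.bot) (hker : E ((ExtObj.kernelFunctor E).map f)) : IsDoubleExt f := by
  obtain ⟨P, p₁, p₂, hP⟩ := exists_isPullback_of_mem f.bot b.mem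
  obtain ⟨l, hl₁, hl₂⟩ := hP.exists_lift a.hom f.top f.w.symm
  have ha : IsKernelOf (kernel.ι a.hom) (l ≫ p₁) := by simpa only [hl₁] using isKernelOf_kernel_ι _
  have hi := IsKernelOf.of_isPullback_lift hP (isKernelOf_kernel_ι b.hom)
  refine of_isPullback hP hl₁ hl₂ hbot (h5.mem ha hi ?_ (hl₁ ▸ a.mem) hker)
  apply hP.hom_ext <;> simp [hl₁, hl₂]

lemma isKernelOf_top [E.IsMultiplicative] {i : c ⟶ a} {f : a ⟶ b} (hi : IsKernelOf i f)
    (hf : IsDoubleExt f) : IsKernelOf i.top f.top :=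
  .of_isPullback (isPullback_top (hi.isPullback (isZero_zero _)).flip hf).flip
    ((ExtObj.domFunctor E).map_isZero (isZero_zero _))

lemma isKernelOf_bot [E.IsMultiplicative] {i : c ⟶ a} {f : a ⟶ b} (hi : IsKernelOf i f)
    (hf : IsDoubleExt f) : IsKernelOf i.bot f.bot :=
  .of_isPullback (isPullback_bot (hi.isPullback (isZero_zero _)).flip hf).flip
    ((ExtObj.codFunctor E).map_isZero (isZero_zero _))

lemma isKernelOf_kernelFunctor_map [E.IsMultiplicative] {i : c ⟶ a} {f : a ⟶ b}
    (hi : IsKernelOf i f) (hf : IsDoubleExt f) :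
    IsKernelOf ((ExtObj.kernelFunctor E).map i) ((ExtObj.kernelFunctor E).map f) :=
  have := (hf.isKernelOf_bot hi).mono
  ExtObj.isKernelOf_kernelFunctor_map (hf.isKernelOf_top hi)

lemma of_comp [E.IsStableUnderComposition] (h4 : AxE4 E) (h5 : AxE5 E) {f : a ⟶ b} {g : b ⟶ c}
    (h : IsDoubleExt (f ≫ g)) : IsDoubleExt g :=
  of_kernelFunctor_map_mem h5 (h4 _ _ h.2.1)
    (h4 _ _ (by simpa only [Functor.map_comp] using h.kernelFunctor_map_mem))

lemma of_comp_eq_id [E.IsMultiplicative] (h4 : AxE4 E) (h5 : AxE5 E) {s : b ⟶ a} {f : a ⟶ b}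
    (h : s ≫ f = 𝟙 b) : IsDoubleExt f :=
  of_comp h4 h5 (f := s) (h ▸ of_isIso (𝟙 b))

end IsDoubleExt

variable [E.IsMultiplicative]

lemma axE5_doubleExtClass (h4 : AxE4 E) (h5 : AxE5 E) : AxE5 (DoubleExtClass E) := by
  intro k' l' a' b' c' ka kb a b f k hfb w wa wb hka hkb ha hk
  obtain rfl := hfb
  have hb : IsDoubleExt b := .of_comp h4 h5 ha
  have hka : IsKernelOf ka (f ≫ b) := ⟨wa, hka⟩
  have hkb : IsKernelOf kb b := ⟨wb, hkb⟩
  refine .of_kernelFunctor_map_mem h5 ?_ ?_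
  · exact h5.mem (ha.isKernelOf_bot hka) (hb.isKernelOf_bot hkb) (congrArg ExtHom.bot w)
      ha.2.1 hk.2.1
  · have hker := ha.isKernelOf_kernelFunctor_map hka
    have hmem := ha.kernelFunctor_map_mem
    rw [Functor.map_comp] at hker hmem
    exact h5.mem hker (hb.isKernelOf_kernelFunctor_map hkb)
      (by simp only [← Functor.map_comp, w]) hmem hk.kernelFunctor_map_mem

lemma protomodularCat_extObj (h𝒟 : SplitShortFive 𝒟) (h4 : AxE4 E) (h5 : AxE5 E) :
    ProtomodularCat (ExtObj E) := by
  refine ⟨fun g s hs h => ?_, fun k f s k' f' s' u v w hs hs' hk hk' hkl hkl' hu hv _ _ => ?_⟩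
  · obtain ⟨p, p₁, p₂, ht, hb, -⟩ := IsDoubleExt.exists_isPullback h (.of_comp_eq_id h4 h5 hs)
    exact ⟨p, p₂, p₁, (ExtHom.isPullback_of_isPullback_top_bot ht hb).flip⟩
  · have hf : IsDoubleExt f := .of_comp_eq_id h4 h5 hs
    have hf' : IsDoubleExt f' := .of_comp_eq_id h4 h5 hs'
    have hk : IsKernelOf k f := ⟨hk, hkl⟩
    have hk' : IsKernelOf k' f' := ⟨hk', hkl'⟩
    have htop : IsIso v.top :=
      h𝒟.isIso (u := u.top) (w := w.top) (congrArg ExtHom.top hs) (congrArg ExtHom.top hs')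
        (hf.isKernelOf_top hk) (hf'.isKernelOf_top hk') (congrArg ExtHom.top hu)
        (congrArg ExtHom.top hv)
    have hbot : IsIso v.bot :=
      h𝒟.isIso (u := u.bot) (w := w.bot) (congrArg ExtHom.bot hs) (congrArg ExtHom.bot hs')
        (hf.isKernelOf_bot hk) (hf'.isKernelOf_bot hk') (congrArg ExtHom.bot hu)
        (congrArg ExtHom.bot hv)
    exact ExtHom.isIso_of_isIso_top_bot v

end

/-! ### Base change and descent -/

namespace ESliceHom
variable {𝒟 : Type u} [Category.{v} 𝒟] {E : MorphismProperty 𝒟} {B : 𝒟} {c d e : ESliceObj E B}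

@[ext] lemma hom_ext {f g : c ⟶ d} (h : f.top = g.top) : f = g := ESliceHom.ext h

@[simp] lemma id_top (c : ESliceObj E B) : ESliceHom.top (𝟙 c) = 𝟙 c.dom := rfl

@[simp] lemma comp_top (f : c ⟶ d) (g : d ⟶ e) : (f ≫ g).top = f.top ≫ g.top := rfl

@[simp] lemma top_hom (f : c ⟶ d) : f.top ≫ d.hom = c.hom := f.w

@[simp] lemma top_hom_assoc (f : c ⟶ d) {X : 𝒟} (g : B ⟶ X) :
    f.top ≫ d.hom ≫ g = c.hom ≫ g := by
  rw [← Category.assoc, top_hom]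

instance isIso_top (f : c ⟶ d) [IsIso f] : IsIso f.top :=
  ⟨(inv f).top, by rw [← comp_top, IsIso.hom_inv_id, id_top],
    by rw [← comp_top, IsIso.inv_hom_id, id_top]⟩

end ESliceHom

/-- Postcomposition with a morphism `f` of `E`, as a functor between the `E`-slice categories. -/
abbrev ESliceObj.postcomp {𝒟 : Type u} [Category.{v} 𝒟] {E : MorphismProperty 𝒟}
    [E.IsStableUnderComposition] {A B : 𝒟} (f : A ⟶ B) (hf : E f) :
    ESliceObj E A ⥤ ESliceObj E B where
  obj c := ⟨c.dom, c.hom ≫ f, E.comp_mem _ _ c.mem hf⟩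
  map φ := ⟨φ.top, by simp⟩

namespace PullbackFunctorAlong
variable {𝒟 : Type u} [Category.{v} 𝒟] {E : MorphismProperty 𝒟} {A B : 𝒟} {f : A ⟶ B}

lemma nonempty [E.HasPullbacks] [E.IsStableUnderBaseChange] (f : A ⟶ B) :
    Nonempty (PullbackFunctorAlong E f) := by
  choose Q p₁ p₂ hQ using fun d : ESliceObj E B => exists_isPullback_of_mem f d.mem
  exact ⟨{
    R :=
      { obj d := ⟨Q d, p₁ d, E.of_isPullback (hQ d).flip d.mem⟩
        map {d d'} φ := ⟨(hQ d').lift (p₁ d) (p₂ d ≫ φ.top) (by simp [(hQ d).w]),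
          (hQ d').lift_fst _ _ _⟩
        map_id d := ESliceHom.hom_ext ((hQ d).hom_ext (by simp) (by simp))
        map_comp {_ _ d} φ ψ := ESliceHom.hom_ext ((hQ d).hom_ext (by simp) (by simp)) }
    top := p₂
    isPB d := (hQ d).flip
    nat {_ d} φ := (hQ d).lift_snd _ _ _ }⟩

variable (P : PullbackFunctorAlong E f)

lemma hom_ext {c : ESliceObj E A} {d : ESliceObj E B} {φ ψ : c ⟶ P.R.obj d}
    (h : φ.top ≫ P.top d = ψ.top ≫ P.top d) : φ = ψ :=
  ESliceHom.hom_ext ((P.isPB d).hom_ext h (by simp))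

variable [E.IsStableUnderComposition] (hf : E f)

/-- Postcomposition with `f` is left adjoint to base change along `f`. -/
noncomputable def adj : ESliceObj.postcomp f hf ⊣ P.R :=
  Adjunction.mkOfHomEquiv
    { homEquiv c d :=
        { toFun t := ⟨(P.isPB d).lift t.top c.hom t.w, (P.isPB d).lift_snd _ _ _⟩
          invFun s := ⟨s.top ≫ P.top d, by simp [(P.isPB d).w]⟩
          left_inv t := ESliceHom.hom_ext ((P.isPB d).lift_fst _ _ _)
          right_inv s := P.hom_ext ((P.isPB d).lift_fst _ _ _) }
      homEquiv_naturality_left_symm φ ψ := ESliceHom.hom_ext (Category.assoc _ _ _)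
      homEquiv_naturality_right φ ψ := P.hom_ext (by simp [P.nat]) }

@[simp] lemma adj_counit_app_top (d : ESliceObj E B) :
    ((P.adj hf).counit.app d).top = P.top d := by
  simp [adj]

lemma adj_unit_app_top_comp (c : ESliceObj E A) :
    ((P.adj hf).unit.app c).top ≫ P.top ((ESliceObj.postcomp f hf).obj c) = 𝟙 c.dom := by
  simp [adj]

end PullbackFunctorAlong

/-- The pair `p ξ : T ⟶ C` is a descent datum on `c : C ⟶ A` along `f : A ⟶ B`. On generalized
elements, `T` consists of the pairs `(x, a')` with `f (c x) = f a'`, `p` is the first projection,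
and `ξ` transports `x` to the fibre of `c` over `a'`, so that `ξ ≫ c` is the second projection;
transport is required to be unital and associative. -/
structure IsDescentDatum {𝒟 : Type u} [Category.{v} 𝒟] {A B C T : 𝒟} (f : A ⟶ B) (c : C ⟶ A)
    (p ξ : T ⟶ C) : Prop where
  isPullback : IsPullback p (ξ ≫ c) (c ≫ f) f
  unit {s : C ⟶ T} : s ≫ p = 𝟙 C → s ≫ ξ ≫ c = c → s ≫ ξ = 𝟙 C
  assoc {X : 𝒟} {s t w : X ⟶ T} :
    s ≫ p = t ≫ ξ → w ≫ p = t ≫ p → s ≫ ξ ≫ c = w ≫ ξ ≫ c → s ≫ ξ = w ≫ ξ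

namespace IsDescentDatum
variable {𝒟 : Type u} [Category.{v} 𝒟] {A B C T : 𝒟} {f : A ⟶ B} {c : C ⟶ A} {p ξ : T ⟶ C}

/- It suffices to check the laws on the universal elements: `s` picks out the pairs `(x, c x)`,
`W` consists of the triples `((x, a'), a'')`, which `m` and `n` map to `(ξ (x, a'), a'')` and
`(x, a'')`. -/
lemma of_isPullback (hT : IsPullback p (ξ ≫ c) (c ≫ f) f) {s : C ⟶ T} (hsp : s ≫ p = 𝟙 C)
    (hsξ : s ≫ ξ = 𝟙 C) {W : 𝒟} {wT : W ⟶ T} {wA : W ⟶ A}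
    (hW : IsPullback wT wA (ξ ≫ c ≫ f) f) {m n : W ⟶ T} (hmp : m ≫ p = wT ≫ ξ)
    (hmA : m ≫ ξ ≫ c = wA) (hnp : n ≫ p = wT ≫ p) (hnA : n ≫ ξ ≫ c = wA) (hmn : m ≫ ξ = n ≫ ξ) :
    IsDescentDatum f c p ξ where
  isPullback := hT
  unit {s'} hp hc := by
    have : s' = s := hT.hom_ext (by rw [hp, hsp]) (by rw [hc, reassoc_of% hsξ])
    rw [this, hsξ]
  assoc {X s t w} hst hwt hsw := by
    have hts : t ≫ ξ ≫ c ≫ f = (s ≫ ξ ≫ c) ≫ f := by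
      rw [← reassoc_of% hst, hT.w]; simp only [Category.assoc]
    obtain ⟨y, hyt, hyA⟩ := hW.exists_lift t (s ≫ ξ ≫ c) hts
    have hs : s = y ≫ m := hT.hom_ext (by simp [hmp, hst, reassoc_of% hyt]) (by simp [hmA, hyA])
    have hw : w = y ≫ n :=
      hT.hom_ext (by simp [hnp, hwt, reassoc_of% hyt]) (by simp [hnA, hyA, hsw])
    rw [hs, hw, Category.assoc, hmn, Category.assoc]

lemma map {𝒟' : Type*} [Category* 𝒟'] (F : 𝒟 ⥤ 𝒟') (h : IsDescentDatum f c p ξ)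
    [HasPullback (ξ ≫ c ≫ f) f] [PreservesLimit (cospan (c ≫ f) f) F]
    [PreservesLimit (cospan (ξ ≫ c ≫ f) f) F] :
    IsDescentDatum (F.map f) (F.map c) (F.map p) (F.map ξ) := by
  obtain ⟨W, wT, wA, hW⟩ : ∃ (W : 𝒟) (wT : W ⟶ T) (wA : W ⟶ A),
      IsPullback wT wA (ξ ≫ c ≫ f) f := ⟨_, _, _, .of_hasPullback _ _⟩
  obtain ⟨s, hsp, hsc⟩ := h.isPullback.exists_lift (𝟙 C) c (by simp)
  obtain ⟨m, hmp, hmc⟩ := h.isPullback.exists_lift (wT ≫ ξ) wA (by simp [← hW.w])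
  obtain ⟨n, hnp, hnc⟩ := h.isPullback.exists_lift (wT ≫ p) wA
    (by simp [← hW.w, h.isPullback.w])
  have hsξ := h.unit hsp hsc
  have hmn := h.assoc hmp hnp (hmc.trans hnc.symm)
  refine of_isPullback (s := F.map s) (wT := F.map wT) (wA := F.map wA) (m := F.map m)
    (n := F.map n) ?_ ?_ ?_ ?_ ?_ ?_ ?_ ?_ ?_
  · simpa only [F.map_comp] using h.isPullback.map F
  all_goals simp only [← F.map_comp, ← F.map_id]
  · rw [hsp]
  · rw [hsξ]
  · exact hW.map F
  · rw [hmp]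
  · rw [hmc]
  · rw [hnp]
  · rw [hnc]
  · rw [hmn]

lemma isKernelPair (h : IsDescentDatum f c p ξ) {D : 𝒟} {d : D ⟶ B} {q : C ⟶ D}
    (hq : IsPullback q c d f) (hpξ : p ≫ q = ξ ≫ q) : IsKernelPair q p ξ :=
  .of_bot (by simpa [hq.w] using h.isPullback) hpξ hq

end IsDescentDatum

/-- Descent along morphisms of `E` is effective for `E`-slice objects: every descent datum arises
from a morphism `d` of `E`, with `c` the base change of `d` along `f`. -/
def EffectiveDescent {𝒟 : Type u} [Category.{v} 𝒟] (E : MorphismProperty 𝒟) : Prop :=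
  ∀ ⦃A B C T : 𝒟⦄ ⦃f : A ⟶ B⦄ ⦃c : C ⟶ A⦄ ⦃p ξ : T ⟶ C⦄, E f → E c → IsDescentDatum f c p ξ →
    ∃ (D : 𝒟) (d : D ⟶ B) (q : C ⟶ D), E d ∧ IsPullback q c d f ∧ p ≫ q = ξ ≫ q

namespace PullbackFunctorAlong
variable {𝒟 : Type u} [Category.{v} 𝒟] {E : MorphismProperty 𝒟} [E.IsStableUnderComposition]
  {A B : 𝒟} {f : A ⟶ B} (P : PullbackFunctorAlong E f) (hf : E f)

/- For an algebra structure `a` on `c`, the left-hand side says that `φ` is a morphism of algebras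
to the comparison image of `d`. -/
lemma map_comp_map_counit_eq_comp_iff {c : ESliceObj E A} {d : ESliceObj E B}
    (a : P.R.obj ((ESliceObj.postcomp f hf).obj c) ⟶ c) (φ : c ⟶ P.R.obj d) :
    P.R.map ((ESliceObj.postcomp f hf).map φ) ≫ P.R.map ((P.adj hf).counit.app d) = a ≫ φ ↔
      P.top ((ESliceObj.postcomp f hf).obj c) ≫ φ.top ≫ P.top d = a.top ≫ φ.top ≫ P.top d := by
  have h : (P.R.map ((ESliceObj.postcomp f hf).map φ) ≫
      P.R.map ((P.adj hf).counit.app d)).top ≫ P.top d =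
        P.top ((ESliceObj.postcomp f hf).obj c) ≫ φ.top ≫ P.top d := by
    simp [P.nat, reassoc_of% P.nat]
  rw [← h, ← Category.assoc a.top, ← ESliceHom.comp_top]
  exact ⟨fun e => by rw [e], P.hom_ext⟩

lemma isDescentDatum_of_unit_of_assoc {c : ESliceObj E A}
    (a : P.R.obj ((ESliceObj.postcomp f hf).obj c) ⟶ c)
    (hunit : (P.adj hf).unit.app c ≫ a = 𝟙 c)
    (hassoc : P.R.map ((P.adj hf).counit.app ((ESliceObj.postcomp f hf).obj c)) ≫ a =
      P.R.map ((ESliceObj.postcomp f hf).map a) ≫ a) :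
    IsDescentDatum f c.hom (P.top ((ESliceObj.postcomp f hf).obj c)) a.top := by
  refine .of_isPullback (by simpa using P.isPB ((ESliceObj.postcomp f hf).obj c))
    (P.adj_unit_app_top_comp hf c) (by simpa using congrArg ESliceHom.top hunit)
    (by simpa using P.isPB ((ESliceObj.postcomp f hf).obj (P.R.obj _)))
    (P.nat ((ESliceObj.postcomp f hf).map a)) ?_
    (P.nat ((P.adj hf).counit.app ((ESliceObj.postcomp f hf).obj c)) |>.trans ?_) ?_
    (by simpa using (congrArg ESliceHom.top hassoc).symm) <;> simp

lemma isDescentDatum_of_algebra (α : (P.adj hf).toMonad.Algebra) :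
    IsDescentDatum f α.A.hom (P.top ((ESliceObj.postcomp f hf).obj α.A)) (ESliceHom.top α.a) :=
  P.isDescentDatum_of_unit_of_assoc hf α.a α.unit α.assoc

lemma isKernelPair_top (d : ESliceObj E B) :
    IsKernelPair (P.top d) (P.top ((ESliceObj.postcomp f hf).obj (P.R.obj d)))
      (P.R.map ((P.adj hf).counit.app d)).top :=
  have h : P.top ((ESliceObj.postcomp f hf).obj (P.R.obj d)) ≫ P.top d =
      (P.R.map ((P.adj hf).counit.app d)).top ≫ P.top d := by
    simpa using (P.nat ((P.adj hf).counit.app d)).symm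
  (P.isDescentDatum_of_algebra hf ((Monad.comparison (P.adj hf)).obj d)).isKernelPair (P.isPB d) h

lemma exists_action_of_isDescentDatum {c : ESliceObj E A} {T : 𝒟} {p ξ : T ⟶ c.dom}
    (h : IsDescentDatum f c.hom p ξ) :
    ∃ (a : P.R.obj ((ESliceObj.postcomp f hf).obj c) ⟶ c)
      (u : (P.R.obj ((ESliceObj.postcomp f hf).obj c)).dom ≅ T),
      u.hom ≫ p = P.top _ ∧ u.hom ≫ ξ = a.top ∧ (P.adj hf).unit.app c ≫ a = 𝟙 c ∧
        P.R.map ((P.adj hf).counit.app ((ESliceObj.postcomp f hf).obj c)) ≫ a =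
          P.R.map ((ESliceObj.postcomp f hf).map a) ≫ a := by
  obtain ⟨u, hup, huc⟩ : ∃ u : (P.R.obj ((ESliceObj.postcomp f hf).obj c)).dom ≅ T,
      u.hom ≫ p = P.top _ ∧ u.hom ≫ ξ ≫ c.hom = (P.R.obj _).hom :=
    ⟨(P.isPB _).isoIsPullback c.dom A h.isPullback,
      IsPullback.isoIsPullback_hom_fst _ _ _ _, IsPullback.isoIsPullback_hom_snd _ _ _ _⟩
  let a : P.R.obj ((ESliceObj.postcomp f hf).obj c) ⟶ c := ⟨u.hom ≫ ξ, by simpa using huc⟩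
  refine ⟨a, u, hup, rfl, ESliceHom.hom_ext ?_, ESliceHom.hom_ext ?_⟩
  · simpa [a] using h.unit (s := ((P.adj hf).unit.app c).top ≫ u.hom)
      (by simpa [hup] using P.adj_unit_app_top_comp hf c) (by simp [huc])
  · have hassoc := h.assoc (s := (P.R.map ((ESliceObj.postcomp f hf).map a)).top ≫ u.hom)
      (t := P.top _ ≫ u.hom)
      (w := (P.R.map ((P.adj hf).counit.app ((ESliceObj.postcomp f hf).obj c))).top ≫ u.hom)
      (by simpa [hup] using P.nat ((ESliceObj.postcomp f hf).map a))
      (by simpa [hup] using P.nat ((P.adj hf).counit.app ((ESliceObj.postcomp f hf).obj c)))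
      (by simp [huc])
    simpa [a] using hassoc.symm

lemma faithful_comparison [∀ d, Epi (P.top d)] : (Monad.comparison (P.adj hf)).Faithful where
  map_injective {d e} t t' h := by
    have hR : P.R.map t = P.R.map t' := congrArg Monad.Algebra.Hom.f h
    refine ESliceHom.hom_ext ((cancel_epi (P.top d)).1 ?_)
    rw [← P.nat, hR, P.nat]

lemma full_comparison [∀ d, IsRegularEpi (P.top d)] : (Monad.comparison (P.adj hf)).Full where
  map_surjective {d e} φ := by
    obtain ⟨t, ht⟩ := IsRegularEpi.exists_of_isKernelPair (P.top d) (P.isKernelPair_top hf d) _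
      ((P.map_comp_map_counit_eq_comp_iff hf _ _).1 φ.h)
    refine ⟨⟨t, (cancel_epi (P.top d)).1 ?_⟩,
      Monad.Algebra.Hom.ext (P.hom_ext ((P.nat _).trans ht))⟩
    rw [reassoc_of% ht, (P.isPB e).w, (P.isPB d).w]
    exact ESliceHom.top_hom_assoc φ.f f

lemma essSurj_comparison (heff : EffectiveDescent E) : (Monad.comparison (P.adj hf)).EssSurj where
  mem_essImage α := by
    obtain ⟨D, d, q, hd, hq, hαq⟩ := heff hf α.A.mem (P.isDescentDatum_of_algebra hf α)
    let i : α.A.dom ≅ (P.R.obj ⟨D, d, hd⟩).dom := hq.isoIsPullback D A (P.isPB ⟨D, d, hd⟩)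
    have hiq : i.hom ≫ P.top ⟨D, d, hd⟩ = q :=
      hq.isoIsPullback_hom_fst D A (P.isPB ⟨D, d, hd⟩)
    have hi : i.hom ≫ (P.R.obj ⟨D, d, hd⟩).hom = α.A.hom :=
      hq.isoIsPullback_hom_snd D A (P.isPB ⟨D, d, hd⟩)
    let φ : α.A ≅ P.R.obj ⟨D, d, hd⟩ :=
      { hom := ⟨i.hom, hi⟩
        inv := ⟨i.inv, by simp [← hi]⟩ }
    have hφ := (P.map_comp_map_counit_eq_comp_iff hf α.a φ.hom).2 (by simpa [φ, hiq] using hαq)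
    exact ⟨⟨D, d, hd⟩, ⟨(Monad.Algebra.isoMk φ hφ).symm⟩⟩

end PullbackFunctorAlong

section
variable {𝒟 : Type u} [Category.{v} 𝒟] {E : MorphismProperty 𝒟} [E.IsStableUnderComposition]
  [E.IsStableUnderBaseChange]

lemma axM_of_effectiveDescent (hreg : E ≤ MorphismProperty.regularEpi 𝒟)
    (heff : EffectiveDescent E) : AxM E := fun f hf P => by
  have : ∀ d, IsRegularEpi (P.top d) := fun d => hreg _ (E.of_isPullback (P.isPB d).flip hf)
  have := P.faithful_comparison hf
  have := P.full_comparison hf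
  have := P.essSurj_comparison hf heff
  exact ⟨{ L := _, adj := P.adj hf, eqv := {} }⟩

end

lemma comparison_isEquivalence_of_monadicRightAdjoint {C D : Type*} [Category.{v} C]
    [Category.{v} D] {R : D ⥤ C} {L : C ⥤ D} (adj : L ⊣ R) [MonadicRightAdjoint R] :
    (Monad.comparison adj).IsEquivalence := by
  have : Monad.CreatesColimitOfIsSplitPair R :=
    ⟨fun f g => Monad.createsGSplitCoequalizersOfMonadic R f g⟩
  exact (Monad.monadicOfCreatesGSplitCoequalizers adj).eqv

namespace PullbackFunctorAlong
variable {𝒟 : Type u} [Category.{v} 𝒟] {E : MorphismProperty 𝒟} {A B : 𝒟} {f : A ⟶ B}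
  (P : PullbackFunctorAlong E f)

section
variable [E.ContainsIdentities]

instance isIso_hom_obj_id : IsIso (P.R.obj ⟨B, 𝟙 B, E.id_mem B⟩).hom :=
  (P.isPB ⟨B, 𝟙 B, E.id_mem B⟩).isIso_snd_of_isIso

lemma top_id : P.top ⟨B, 𝟙 B, E.id_mem B⟩ = (P.R.obj ⟨B, 𝟙 B, E.id_mem B⟩).hom ≫ f := by
  simpa using (P.isPB ⟨B, 𝟙 B, E.id_mem B⟩).w

end

variable [E.IsMultiplicative] (hf : E f)

lemma eq_of_comp_eq [P.R.Faithful] {d : ESliceObj E B} {s t : B ⟶ d.dom} (hs : s ≫ d.hom = 𝟙 B)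
    (ht : t ≫ d.hom = 𝟙 B) (h : f ≫ s = f ≫ t) : s = t := by
  let s' : ESliceObj.mk B (𝟙 B) (E.id_mem B) ⟶ d := ⟨s, hs⟩
  let t' : ESliceObj.mk B (𝟙 B) (E.id_mem B) ⟶ d := ⟨t, ht⟩
  have : s' = t' := P.R.map_injective (P.hom_ext (by simp [P.nat, top_id, s', t', h]))
  exact congrArg ESliceHom.top this

lemma exists_comp_eq [(Monad.comparison (P.adj hf)).Full] {d : ESliceObj E B} {l : A ⟶ d.dom}
    (hl : l ≫ d.hom = f) (h : ∀ ⦃Z : 𝒟⦄ (x y : Z ⟶ A), x ≫ f = y ≫ f → x ≫ l = y ≫ l) :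
    ∃ s : B ⟶ d.dom, f ≫ s = l := by
  let I : ESliceObj E B := ⟨B, 𝟙 B, E.id_mem B⟩
  let φ : P.R.obj I ⟶ P.R.obj d :=
    ⟨(P.isPB d).lift ((P.R.obj I).hom ≫ l) (P.R.obj I).hom (by simp [hl]),
      (P.isPB d).lift_snd _ _ _⟩
  have hφ : φ.top ≫ P.top d = (P.R.obj I).hom ≫ l := (P.isPB d).lift_fst _ _ _
  have hε := h (P.top ((ESliceObj.postcomp f hf).obj (P.R.obj I)) ≫ (P.R.obj I).hom)
    ((P.R.map ((P.adj hf).counit.app I)).top ≫ (P.R.obj I).hom)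
    (by simpa only [Category.assoc, I, top_id] using (P.isKernelPair_top hf I).w)
  let φ' : (Monad.comparison (P.adj hf)).obj I ⟶ (Monad.comparison (P.adj hf)).obj d :=
    ⟨φ, (P.map_comp_map_counit_eq_comp_iff hf _ φ).2 <| by
      rw [hφ, ← Category.assoc, hε, Category.assoc]; rfl⟩
  obtain ⟨s, hs⟩ := (Monad.comparison (P.adj hf)).map_surjective φ'
  have hs' : P.R.map s = φ := congrArg Monad.Algebra.Hom.f hs
  refine ⟨s.top, ?_⟩
  rw [← cancel_epi (P.R.obj I).hom, ← hφ, ← hs', P.nat, P.top_id, Category.assoc]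

end PullbackFunctorAlong

namespace AxM
variable {𝒟 : Type u} [Category.{v} 𝒟] {E : MorphismProperty 𝒟} [E.IsStableUnderComposition]
  [E.IsStableUnderBaseChange] [E.HasPullbacks]

lemma effectiveDescent (hM : AxM E) : EffectiveDescent E := by
  intro A B C T f c p ξ hf hc h
  obtain ⟨P⟩ := PullbackFunctorAlong.nonempty (E := E) f
  obtain ⟨_⟩ := hM f hf P
  have := comparison_isEquivalence_of_monadicRightAdjoint (P.adj hf)
  obtain ⟨a, u, hup, huξ, hunit, hassoc⟩ :=
    P.exists_action_of_isDescentDatum hf (c := ⟨C, c, hc⟩) h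
  let α : (P.adj hf).toMonad.Algebra := ⟨_, a, hunit, hassoc⟩
  obtain ⟨d, ⟨i⟩⟩ := Functor.EssSurj.mem_essImage (F := Monad.comparison (P.adj hf)) α
  let φ : ⟨C, c, hc⟩ ⟶ P.R.obj d := i.inv.f
  have : IsIso φ := inferInstanceAs (IsIso ((Monad.forget _).map i.inv))
  have hφ := (P.map_comp_map_counit_eq_comp_iff hf a φ).1 i.inv.h
  have hsq : IsPullback φ.top c (P.R.obj d).hom (𝟙 A) :=
    .of_horiz_isIso ⟨by simp⟩
  refine ⟨d.dom, d.hom, φ.top ≫ P.top d, d.mem, ?_, ?_⟩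
  · simpa using hsq.paste_horiz (P.isPB d)
  · rw [← cancel_epi u.hom, reassoc_of% hup, hφ, reassoc_of% huξ]

end AxM

section
open scoped ZeroObject

variable {𝒟 : Type u} [Category.{v} 𝒟] [HasZeroMorphisms 𝒟] [HasZeroObject 𝒟]
  {E : MorphismProperty 𝒟} [E.IsStableUnderBaseChange] [E.HasPullbacks]

lemma AxE4.exists_prod_mem [E.ContainsIdentities] (h4 : AxE4 E) (B X : 𝒟) :
    ∃ (V : ESliceObj E B) (v : V.dom ⟶ X), IsPullback V.hom v (0 : B ⟶ 0) (0 : X ⟶ 0) := by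
  have mem_zero : E (0 : X ⟶ 0) := h4.mem_of_comp_eq_id (s := 0) (by simp)
  obtain ⟨V, d, v, hV⟩ := exists_isPullback_of_mem (0 : B ⟶ 0) mem_zero
  exact ⟨⟨V, d, E.of_isPullback hV.flip mem_zero⟩, v, hV⟩

lemma AxM.le_regularEpi [E.IsMultiplicative] (h4 : AxE4 E) (hM : AxM E) :
    E ≤ MorphismProperty.regularEpi 𝒟 := by
  intro A B f hf
  have := E.hasPullback f hf
  obtain ⟨P⟩ := PullbackFunctorAlong.nonempty (E := E) f
  obtain ⟨_⟩ := hM f hf P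
  have := comparison_isEquivalence_of_monadicRightAdjoint (P.adj hf)
  have : P.R.Faithful := .of_iso (Monad.comparisonForget (P.adj hf))
  have : Epi f := ⟨fun {X} s t hst => by
    obtain ⟨V, v, hV⟩ := h4.exists_prod_mem B X
    obtain ⟨s', hs', hs⟩ := hV.exists_lift (𝟙 B) s (by simp)
    obtain ⟨t', ht', ht⟩ := hV.exists_lift (𝟙 B) t (by simp)
    have := P.eq_of_comp_eq hs' ht' (hV.hom_ext (by simp [hs', ht']) (by simp [hs, ht, hst]))
    rw [← hs, this, ht]⟩
  refine .of_epi_of_exists fun X t ht => ?_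
  have ht' ⦃Z : 𝒟⦄ (x y : Z ⟶ A) (hxy : x ≫ f = y ≫ f) : x ≫ t = y ≫ t := by
    rw [← pullback.lift_fst x y hxy, Category.assoc, ht, pullback.lift_snd_assoc]
  obtain ⟨V, v, hV⟩ := h4.exists_prod_mem B X
  obtain ⟨l, hl, hlt⟩ := hV.exists_lift f t (by simp)
  obtain ⟨s, hs⟩ := P.exists_comp_eq hf hl fun Z x y hxy =>
    hV.hom_ext (by simp [hl, hxy]) (by simp [hlt, ht' x y hxy])
  exact ⟨s ≫ v, by rw [reassoc_of% hs, hlt]⟩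

end

/-! ### Descent along double extensions -/

section
variable {𝒟 : Type u} [Category.{v} 𝒟] {E : MorphismProperty 𝒟} [E.IsStableUnderBaseChange]
  [E.IsStableUnderComposition] [E.HasPullbacks]

lemma IsDoubleExt.isRegularEpi {a b : ExtObj E} {f : a ⟶ b} (hf : IsDoubleExt f)
    [IsRegularEpi f.top] [IsRegularEpi f.bot] : IsRegularEpi f := by
  obtain ⟨_, p₁, p₂, ht, hb, -⟩ := hf.exists_isPullback f
  have : HasPullback f f := (ExtHom.isPullback_of_isPullback_top_bot ht hb).hasPullback
  have hk := IsPullback.of_hasPullback f f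
  have : Epi f := ⟨fun s t hst => ExtHom.hom_ext
    ((cancel_epi f.top).1 (congrArg ExtHom.top hst))
    ((cancel_epi f.bot).1 (congrArg ExtHom.bot hst))⟩
  refine .of_epi_of_exists fun c t ht => ?_
  obtain ⟨u, hu⟩ := IsRegularEpi.exists_of_isKernelPair f.top (isPullback_top hk hf) t.top
    (congrArg ExtHom.top ht)
  obtain ⟨v, hv⟩ := IsRegularEpi.exists_of_isKernelPair f.bot (isPullback_bot hk hf) t.bot
    (congrArg ExtHom.bot ht)
  have w : u ≫ c.hom = b.hom ≫ v := by
    rw [← cancel_epi f.top, reassoc_of% hu, t.w, reassoc_of% f.w, hv]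
  exact ⟨⟨u, v, w⟩, ExtHom.hom_ext hu hv⟩

lemma doubleExtClass_le_regularEpi (hreg : E ≤ MorphismProperty.regularEpi 𝒟) :
    DoubleExtClass E ≤ MorphismProperty.regularEpi (ExtObj E) := fun _ _ f hf =>
  have : IsRegularEpi f.top := hreg _ hf.1
  have : IsRegularEpi f.bot := hreg _ hf.2.1
  hf.isRegularEpi

lemma EffectiveDescent.doubleExtClass [HasZeroMorphisms 𝒟] [HasZeroObject 𝒟]
    (heff : EffectiveDescent E) (h4 : AxE4 E) (h5 : AxE5 E)
    (hreg : E ≤ MorphismProperty.regularEpi 𝒟) :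
    EffectiveDescent (DoubleExtClass E) := by
  intro a b c t f c' p ξ hf hc h
  have := hf.preservesLimit_domFunctor (c' ≫ f)
  have := hf.preservesLimit_domFunctor (ξ ≫ c' ≫ f)
  have := hf.preservesLimit_codFunctor (c' ≫ f)
  have := hf.preservesLimit_codFunctor (ξ ≫ c' ≫ f)
  have : HasPullback (ξ ≫ c' ≫ f) f :=
    let ⟨_, _, _, hW, _⟩ := axE2_doubleExtClass (ξ ≫ c' ≫ f) f hf
    hW.hasPullback
  have ht : IsDescentDatum f.top c'.top p.top ξ.top := h.map (ExtObj.domFunctor E)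
  have hb : IsDescentDatum f.bot c'.bot p.bot ξ.bot := h.map (ExtObj.codFunctor E)
  obtain ⟨D₁, d₁, q₁, -, hq₁, hpq₁⟩ := heff hf.1 hc.1 ht
  obtain ⟨D₀, d₀, q₀, -, hq₀, hpq₀⟩ := heff hf.2.1 hc.2.1 hb
  have hEq₁ : E q₁ := E.of_isPullback hq₁.flip hf.1
  have hEq₀ : E q₀ := E.of_isPullback hq₀.flip hf.2.1
  have : IsRegularEpi q₁ := hreg q₁ hEq₁
  obtain ⟨δ, hδ⟩ := IsRegularEpi.exists_of_isKernelPair q₁ (ht.isKernelPair hq₁ hpq₁)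
    (c.hom ≫ q₀) (by rw [reassoc_of% p.w, reassoc_of% ξ.w, hpq₀])
  have hδd : d₁ ≫ b.hom = δ ≫ d₀ := by
    rw [← cancel_epi q₁, reassoc_of% hq₁.w, reassoc_of% hδ, f.w, hq₀.w, reassoc_of% c'.w]
  let D : ExtObj E := ⟨D₁, D₀, δ, h4 q₁ δ (hδ ▸ E.comp_mem _ _ c.mem hEq₀)⟩
  let q : c ⟶ D := ⟨q₁, q₀, hδ⟩
  let d : D ⟶ b := ⟨d₁, d₀, hδd⟩
  have hq : IsPullback q c' d f := ExtHom.isPullback_of_isPullback_top_bot hq₁ hq₀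
  have hqd : IsDoubleExt (q ≫ d) := hq.w ▸ IsDoubleExt.comp hc hf
  exact ⟨D, d, q, .of_comp h4 h5 hqd, hq, ExtHom.hom_ext hpq₁ hpq₀⟩

end

/-- if `𝒞` is pointed protomodular and the class `ℰ` satisfies
(E1)–(E5) and (M), then the category `Ext_ℰ(𝒞)` of `ℰ`-extensions is pointed and
protomodular, and the class `ℰ¹` of double `ℰ`-extensions again satisfies (E1)–(E5)
and (M). -/
theorem extension_category_inherits_axioms
    {𝒞 : Type u} [Category.{v} 𝒞] [HasZeroMorphisms 𝒞] [HasZeroObject 𝒞]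
    (E : MorphismProperty 𝒞)
    (hpm : ProtomodularCat 𝒞)
    (h1 : AxE1 E) (h2 : AxE2 E) (h3 : AxE3 E) (h4 : AxE4 E) (h5 : AxE5 E)
    (hM : AxM E) :
    HasZeroObject (ExtObj E) ∧
    ProtomodularCat (ExtObj E) ∧
    AxE1 (DoubleExtClass E) ∧ AxE2 (DoubleExtClass E) ∧ AxE3 (DoubleExtClass E) ∧
    AxE4 (DoubleExtClass E) ∧ AxE5 (DoubleExtClass E) ∧ AxM (DoubleExtClass E) := by
  have := h1.isMultiplicative h3
  have := h1.respectsIso h3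
  have := h2.hasPullbacks
  have := h2.isStableUnderBaseChange
  have hE1 : AxE1 (DoubleExtClass E) := fun f _ => .of_isIso f
  have hE2 : AxE2 (DoubleExtClass E) := axE2_doubleExtClass
  have hE3 : AxE3 (DoubleExtClass E) := fun _ _ hf hg => .comp hf hg
  have hE4 : AxE4 (DoubleExtClass E) := fun _ _ hfg => .of_comp h4 h5 hfg
  have hM' : AxM (DoubleExtClass E) := by
    have hreg := hM.le_regularEpi h4
    have := hE1.isMultiplicative hE3
    have := hE1.respectsIso hE3
    have := hE2.isStableUnderBaseChange
    exact fun {_ _} => axM_of_effectiveDescent (doubleExtClass_le_regularEpi hreg)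
      (hM.effectiveDescent.doubleExtClass h4 h5 hreg)
  exact ⟨inferInstance, protomodularCat_extObj hpm.2 h4 h5, hE1, hE2, hE3, hE4,
    axE5_doubleExtClass h4 h5, hM'⟩
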